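/- Let (M, g) be a compact Riemannian manifold, N ⊂ M a compact subset, D ⊂ N compact, and r > 0. Define f(x) = dist_g0(x, D) for a second metric g0 = e^(2φ)g conformal to g. Then ∫_0^r H^{n−1}_g(f^{−1}(t) ∩ Int N) dt ≤ (H^n_{g0}(f^{−1}((0,r)) ∩ N))^(1/n) · (H^n_g(f^{−1}((0,r)) ∩ N))^((n−1)/n). -/

import Mathlib

open MeasureTheory

open Filter Topology Metric Set in
open scoped NNReal ENNReal in
theorem aux_eilenberg {X : Type*} [MetricSpace X] [MeasurableSpace X] [BorelSpace X]
    (d : ℝ) (hd : 0 < d) (f : X → ℝ) (S : Set X) (L : ℝ≥0) (hL : 0 < L)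
    (hf : LipschitzOnWith L f S) :
    ∃ h : ℝ → ℝ≥0∞, Measurable h ∧
      (∀ t, Measure.hausdorffMeasure d (S ∩ f ⁻¹' {t}) ≤ h t) ∧
      ∫⁻ t, h t ≤ L * Measure.hausdorffMeasure (d + 1) S := by
  by_cases htop : Measure.hausdorffMeasure (d + 1) S = ∞
  · refine ⟨fun _ => ∞, measurable_const, fun _ => le_top, ?_⟩
    rw [htop, ENNReal.mul_top (by simpa using hL.ne')]
    exact le_top
  have hcov : ∀ k : ℕ, ∃ T : ℕ → Set X, S ⊆ ⋃ i, T i ∧ (∀ i, T i ⊆ S) ∧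
      (∀ i, ediam (T i) ≤ ((k : ℝ≥0∞) + 1)⁻¹) ∧
      ∑' i, ediam (T i) ^ (d + 1) ≤
        Measure.hausdorffMeasure (d + 1) S + ((k : ℝ≥0∞) + 1)⁻¹ := by
    intro k
    have hkpos : (0 : ℝ≥0∞) < ((k : ℝ≥0∞) + 1)⁻¹ := by simp
    have h1 : (⨅ (t : ℕ → Set X) (_ : S ⊆ ⋃ n, t n)
        (_ : ∀ n, ediam (t n) ≤ ((k : ℝ≥0∞) + 1)⁻¹),
          ∑' n, ⨆ _ : (t n).Nonempty, ediam (t n) ^ (d + 1)) <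
        Measure.hausdorffMeasure (d + 1) S + ((k : ℝ≥0∞) + 1)⁻¹ := by
      refine lt_of_le_of_lt ?_ (ENNReal.lt_add_right htop hkpos.ne')
      rw [Measure.hausdorffMeasure_apply]
      exact le_iSup₂ (f := fun (r : ℝ≥0∞) (_ : 0 < r) =>
        ⨅ (t : ℕ → Set X) (_ : S ⊆ ⋃ n, t n) (_ : ∀ n, ediam (t n) ≤ r),
          ∑' n, ⨆ _ : (t n).Nonempty, ediam (t n) ^ (d + 1)) _ hkpos
    simp only [iInf_lt_iff] at h1
    obtain ⟨T, hT1, hT2, hT3⟩ := h1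
    refine ⟨fun i => T i ∩ S, ?_, fun i => inter_subset_right, fun i =>
      (ediam_mono inter_subset_left).trans (hT2 i), ?_⟩
    · rw [← iUnion_inter]
      exact subset_inter hT1 le_rfl
    · refine le_trans (ENNReal.tsum_le_tsum fun i => ?_) hT3.le
      rcases (T i).eq_empty_or_nonempty with h | h
      · have : ¬ (d + 1 < 0) := by linarith
        have h2 : 0 < d + 1 := by linarith
        simp [h, ENNReal.zero_rpow_of_pos h2]
      · simp only [h, iSup_pos]
        exact ENNReal.rpow_le_rpow (ediam_mono inter_subset_left) (by linarith)
  choose T hT1 hT2 hT3 hT4 using hcov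
  let F : ℕ → ℝ → ℝ≥0∞ := fun k t => ∑' i, (toMeasurable volume (f '' T k i)).indicator
    (fun _ => ediam (T k i) ^ d) t
  have hFm : ∀ k, Measurable (F k) := fun k =>
    Measurable.ennreal_tsum fun i => measurable_const.indicator (measurableSet_toMeasurable _ _)
  have hlim : Tendsto (fun k : ℕ => ((k : ℝ≥0∞) + 1)⁻¹) atTop (𝓝 0) := by
    have := (tendsto_add_atTop_iff_nat 1).2 ENNReal.tendsto_inv_nat_nhds_zero
    simpa using this
  refine ⟨fun t => liminf (fun k => F k t) atTop, Measurable.liminf hFm, fun t => ?_, ?_⟩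
  · refine (Measure.hausdorffMeasure_le_liminf_tsum d _ (fun k : ℕ => ((k : ℝ≥0∞) + 1)⁻¹) hlim
      (fun k i => T k i ∩ f ⁻¹' {t}) (Eventually.of_forall fun k i =>
        (ediam_mono inter_subset_left).trans (hT3 k i)) (Eventually.of_forall fun k => ?_)).trans ?_
    · rw [← iUnion_inter]
      exact inter_subset_inter_left _ (hT1 k)
    · refine liminf_le_liminf (Eventually.of_forall fun k => ENNReal.tsum_le_tsum fun i => ?_)
      rcases (T k i ∩ f ⁻¹' {t}).eq_empty_or_nonempty with h | ⟨x, hx, hxt⟩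
      · simp [h, ENNReal.zero_rpow_of_pos hd]
      · have : t ∈ toMeasurable volume (f '' T k i) :=
          subset_toMeasurable _ _ ⟨x, hx, hxt⟩
        rw [indicator_of_mem this]
        exact ENNReal.rpow_le_rpow (ediam_mono inter_subset_left) hd.le
  · refine (lintegral_liminf_le hFm).trans ?_
    have hle : ∀ k, ∫⁻ t, F k t ≤
        L * (Measure.hausdorffMeasure (d + 1) S + ((k : ℝ≥0∞) + 1)⁻¹) := by
      intro k
      have : ∫⁻ t, F k t = ∑' i, ediam (T k i) ^ d * volume (f '' T k i) := by
        simp only [F]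
        rw [lintegral_tsum fun i =>
          (measurable_const.indicator (measurableSet_toMeasurable _ _)).aemeasurable]
        congr 1 with i
        rw [lintegral_indicator_const (measurableSet_toMeasurable _ _), measure_toMeasurable]
      rw [this]
      refine le_trans ?_ (mul_le_mul_right (hT4 k) _)
      rw [← ENNReal.tsum_mul_left]
      refine ENNReal.tsum_le_tsum fun i => ?_
      rw [ENNReal.rpow_add_of_nonneg _ _ hd.le zero_le_one, ENNReal.rpow_one, mul_left_comm]
      refine mul_le_mul_right ?_ _
      exact (Real.volume_le_diam _).trans (by
        simpa using (hf.mono (hT2 k i)).holderOnWith.ediam_image_le)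
    refine (liminf_le_liminf (Eventually.of_forall hle)).trans ?_
    apply le_of_eq
    apply Tendsto.liminf_eq
    have h3 : Tendsto (fun k : ℕ => Measure.hausdorffMeasure (d + 1) S + ((k : ℝ≥0∞) + 1)⁻¹) atTop
        (𝓝 (Measure.hausdorffMeasure (d + 1) S + 0)) := tendsto_const_nhds.add hlim
    rw [add_zero] at h3
    exact ENNReal.Tendsto.const_mul h3 (Or.inr ENNReal.coe_ne_top)

open Filter Topology Metric Set in
open scoped NNReal ENNReal in
theorem aux_holder (p q : ℝ) (hpq : p.HolderConjugate q) (a b : ℕ → ℝ≥0∞) :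
    ∑' i, a i ^ (1 / p) * b i ^ (1 / q) ≤ (∑' i, a i) ^ (1 / p) * (∑' i, b i) ^ (1 / q) := by
  have h := ENNReal.lintegral_mul_le_Lp_mul_Lq (Measure.count : Measure ℕ) hpq
    (f := fun i => a i ^ (1 / p)) (g := fun i => b i ^ (1 / q))
    (measurable_of_countable _).aemeasurable (measurable_of_countable _).aemeasurable
  have h1 : p ≠ 0 := hpq.ne_zero
  have h2 : q ≠ 0 := hpq.symm.ne_zero
  simpa [lintegral_count, ← ENNReal.rpow_mul, h1, h2] using h

open Filter Topology Metric Set in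
open scoped NNReal ENNReal in
theorem aux_core (n : ℕ) (hn : 2 ≤ n) {X : Type*} [MetricSpace X] [MeasurableSpace X]
    [BorelSpace X] [SecondCountableTopology X] (ν : Measure X) (d0 : X → X → ℝ)
    (hd0 : ∀ y, Continuous fun x => d0 x y) (hd00 : ∀ x, d0 x x = 0)
    (hν : ∀ (S : Set X) (c : ℝ≥0), 0 < c → (∀ x ∈ S, ∀ y ∈ S, c * dist x y ≤ d0 x y) →
      (c : ℝ≥0∞) ^ (n : ℝ) * Measure.hausdorffMeasure (n : ℝ) S ≤ ν S)
    (φ : X → ℝ)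
    (hconf : ∀ x, Tendsto (fun y => d0 x y / dist x y) (𝓝[{x}ᶜ] x) (𝓝 (Real.exp (φ x))))
    (f : X → ℝ) (hf : ∀ x y, |f x - f y| ≤ d0 x y)
    (A : Set X) (hA : MeasurableSet A) (l : ℝ≥0) (hl : 1 < l) :
    ∃ h : ℝ → ℝ≥0∞, Measurable h ∧
      (∀ t, Measure.hausdorffMeasure ((n : ℝ) - 1) (A ∩ f ⁻¹' {t}) ≤ h t) ∧
      ∫⁻ t, h t ≤ l * (ν A ^ ((1 : ℝ) / n) *
        Measure.hausdorffMeasure (n : ℝ) A ^ (((n : ℝ) - 1) / n)) := by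
  have hn' : (2 : ℝ) ≤ n := by exact_mod_cast hn
  let E : ℝ≥0 → ℕ → Set X := fun c k => {x | ∀ y, dist x y < ((k : ℝ) + 1)⁻¹ →
    c * dist x y ≤ d0 x y ∧ d0 x y ≤ l * c * dist x y}
  have hE : ∀ c k, IsClosed (E c k) := by
    intro c k
    have : E c k = ⋂ y, ({x | ((k : ℝ) + 1)⁻¹ ≤ dist x y} ∪
        ({x | c * dist x y ≤ d0 x y} ∩ {x | d0 x y ≤ l * c * dist x y})) := by
      ext x
      simp only [E, mem_setOf_eq, mem_iInter, mem_union, mem_inter_iff]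
      refine forall_congr' fun y => ?_
      rw [← not_lt (a := dist x y), imp_iff_not_or]
    rw [this]
    refine isClosed_iInter fun y => ?_
    have := hd0 y
    refine IsClosed.union (isClosed_le (by fun_prop) (by fun_prop))
      (IsClosed.inter (isClosed_le (by fun_prop) (by fun_prop))
        (isClosed_le (by fun_prop) (by fun_prop)))
  rcases isEmpty_or_nonempty X with hX | hX
  · refine ⟨fun _ => 0, measurable_const, fun t => ?_, by simp⟩
    rw [Set.eq_empty_of_isEmpty (A ∩ f ⁻¹' {t})]; simp
  let u := TopologicalSpace.denseSeq X
  have hu : DenseRange u := TopologicalSpace.denseRange_denseSeq X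
  obtain ⟨cs, hcs⟩ : ∃ cs : ℕ → ℝ≥0, DenseRange cs := ⟨_, TopologicalSpace.denseRange_denseSeq ℝ≥0⟩
  -- pieces
  let P : ℕ × ℕ × ℕ → Set X := fun p =>
    if 0 < cs p.1 then E (cs p.1) p.2.1 ∩ ball (u p.2.2) (((p.2.1 : ℝ) + 1)⁻¹ / 2) else ∅
  have hPm : ∀ p, MeasurableSet (P p) := by
    intro p
    simp only [P]
    split_ifs
    · exact (hE _ _).measurableSet.inter measurableSet_ball
    · exact MeasurableSet.empty
  have hPcov : ∀ x, ∃ p, x ∈ P p := by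
    intro x
    have hl' : (1 : ℝ) < l := by exact_mod_cast hl
    have hex := Real.exp_pos (φ x)
    have hlt : Real.toNNReal (Real.exp (φ x)) / l < Real.toNNReal (Real.exp (φ x)) := by
      apply NNReal.coe_lt_coe.1
      rw [NNReal.coe_div, Real.coe_toNNReal _ hex.le]
      exact div_lt_self hex hl'
    obtain ⟨j, hj1, hj2⟩ := hcs.exists_mem_open isOpen_Ioo (nonempty_Ioo.2 hlt)
    have hc1 : (cs j : ℝ) < Real.exp (φ x) := by
      have := NNReal.coe_lt_coe.2 hj2
      rwa [Real.coe_toNNReal _ hex.le] at this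
    have hc2 : Real.exp (φ x) < l * cs j := by
      have : Real.exp (φ x) / l < cs j := by
        have := NNReal.coe_lt_coe.2 hj1
        rwa [NNReal.coe_div, Real.coe_toNNReal _ hex.le] at this
      rw [div_lt_iff₀ (by linarith)] at this
      linarith
    have hcpos : 0 < cs j := lt_of_le_of_lt zero_le hj1
    have hev := (hconf x).eventually (Ioo_mem_nhds hc1 hc2)
    rw [eventually_nhdsWithin_iff, Metric.eventually_nhds_iff] at hev
    obtain ⟨ε, hε, hev⟩ := hev
    obtain ⟨k, hk⟩ := exists_nat_one_div_lt hε
    rw [one_div] at hk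
    have hkpos : (0 : ℝ) < ((k : ℝ) + 1)⁻¹ := by positivity
    obtain ⟨m, hm⟩ := hu.exists_dist_lt x (half_pos hkpos)
    refine ⟨(j, k, m), ?_⟩
    simp only [P, hcpos, if_true]
    refine ⟨fun y hy => ?_, hm⟩
    by_cases hxy : y = x
    · subst hxy; simp [hd00]
    · have hpos : 0 < dist x y := dist_pos.2 (Ne.symm hxy)
      have := hev (y := y) (by rw [dist_comm]; linarith) hxy
      obtain ⟨h1, h2⟩ := this
      rw [lt_div_iff₀ hpos] at h1
      rw [div_lt_iff₀ hpos] at h2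
      exact ⟨h1.le, h2.le⟩
  have hPd : ∀ p, ∀ x ∈ P p, ∀ y ∈ P p, 0 < cs p.1 ∧ cs p.1 * dist x y ≤ d0 x y ∧
      d0 x y ≤ l * cs p.1 * dist x y := by
    intro p x hx y hy
    simp only [P] at hx hy
    split_ifs at hx hy with hc
    · refine ⟨hc, hx.1 y ?_⟩
      have h1 := hx.2
      have h2 := hy.2
      rw [mem_ball] at h1 h2
      have := dist_triangle_right x y (u p.2.2)
      linarith
    · exact absurd hx (notMem_empty _)
  obtain ⟨e, he⟩ := exists_surjective_nat (ℕ × ℕ × ℕ)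
  let Q : ℕ → Set X := fun i => A ∩ disjointed (fun i => P (e i)) i
  have hQm : ∀ i, MeasurableSet (Q i) := fun i =>
    hA.inter (MeasurableSet.disjointed (fun i => hPm (e i)) i)
  have hQP : ∀ i, Q i ⊆ P (e i) := fun i =>
    inter_subset_right.trans (disjointed_subset _ i)
  have hQU : ⋃ i, Q i = A := by
    rw [← inter_iUnion, iUnion_disjointed]
    refine inter_eq_left.2 fun x _ => ?_
    obtain ⟨p, hp⟩ := hPcov x
    obtain ⟨i, rfl⟩ := he p
    exact mem_iUnion.2 ⟨i, hp⟩
  have hQd : Pairwise (Function.onFun Disjoint Q) := fun i j hij =>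
    (disjoint_disjointed (fun i => P (e i)) hij).mono inter_subset_right inter_subset_right
  have hpiece : ∀ i, ∃ h : ℝ → ℝ≥0∞, Measurable h ∧
      (∀ t, Measure.hausdorffMeasure ((n : ℝ) - 1) (Q i ∩ f ⁻¹' {t}) ≤ h t) ∧
      ∫⁻ t, h t ≤ l * (ν (Q i) ^ ((1 : ℝ) / n) *
        Measure.hausdorffMeasure (n : ℝ) (Q i) ^ (((n : ℝ) - 1) / n)) := by
    intro i
    rcases (Q i).eq_empty_or_nonempty with h0 | ⟨x0, hx0⟩
    · exact ⟨fun _ => 0, measurable_const, fun t => by simp [h0], by simp⟩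
    have hc := (hPd _ x0 (hQP i hx0) x0 (hQP i hx0)).1
    set c := cs (e i).1
    have hlip : LipschitzOnWith (l * c) f (Q i) := by
      refine LipschitzOnWith.of_dist_le_mul fun x hx y hy => ?_
      rw [Real.dist_eq]
      push_cast
      exact (hf x y).trans (hPd _ x (hQP i hx) y (hQP i hy)).2.2
    obtain ⟨h, hm, h1, h2⟩ := aux_eilenberg ((n : ℝ) - 1) (by linarith) f (Q i) (l * c)
      (mul_pos (by positivity) hc) hlip
    refine ⟨h, hm, h1, h2.trans ?_⟩
    rw [sub_add_cancel, ENNReal.coe_mul, mul_assoc]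
    refine mul_le_mul_right ?_ _
    have h3 := hν (Q i) c hc fun x hx y hy => (hPd _ x (hQP i hx) y (hQP i hy)).2.1
    have hn0 : (0 : ℝ) < n := by linarith
    set H := Measure.hausdorffMeasure (n : ℝ) (Q i)
    calc (c : ℝ≥0∞) * H = c * (H ^ ((1 : ℝ) / n) * H ^ (((n : ℝ) - 1) / n)) := by
          rw [← ENNReal.rpow_add_of_nonneg _ _ (by positivity)
            (div_nonneg (by linarith) hn0.le), ← add_div, add_sub_cancel, div_self hn0.ne',
            ENNReal.rpow_one]
      _ = ((c : ℝ≥0∞) ^ (n : ℝ) * H) ^ ((1 : ℝ) / n) * H ^ (((n : ℝ) - 1) / n) := by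
          rw [ENNReal.mul_rpow_of_nonneg _ _ (by positivity), ← ENNReal.rpow_mul,
            mul_one_div_cancel hn0.ne', ENNReal.rpow_one, mul_assoc]
      _ ≤ _ := mul_le_mul_left (ENNReal.rpow_le_rpow h3 (by positivity)) _
  choose h hm h1 h2 using hpiece
  refine ⟨fun t => ∑' i, h i t, Measurable.ennreal_tsum hm, fun t => ?_, ?_⟩
  · rw [← hQU, iUnion_inter]
    exact (measure_iUnion_le _).trans (ENNReal.tsum_le_tsum fun i => h1 i t)
  · rw [lintegral_tsum fun i => (hm i).aemeasurable]
    refine (ENNReal.tsum_le_tsum h2).trans ?_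
    rw [ENNReal.tsum_mul_left]
    refine mul_le_mul_right ?_ _
    have hpq : (n : ℝ).HolderConjugate ((n : ℝ) / (n - 1)) := by
      rw [Real.holderConjugate_iff_eq_conjExponent (by linarith)]
    have := aux_holder n _ hpq (fun i => ν (Q i)) fun i => Measure.hausdorffMeasure (n : ℝ) (Q i)
    rw [← measure_iUnion hQd hQm, ← measure_iUnion hQd hQm, hQU, one_div_div] at this
    exact this

/-- the length-area estimate.  `M` carries two conformal metrics `g`
(inducing the same topology) and `g0`; conformality is expressed by the metric
derivative relation `d_{g0}(x,y)/d_g(x,y) → e^{φ(x)}` as `y → x` for a continuous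
function `φ`.  With `f = dist_{g0}(·, D)` for a compact `D ⊆ N` and `N` compact,
`∫_0^r H^{n−1}_g(f⁻¹(t) ∩ Int N) dt
  ≤ (H^n_{g0}(f⁻¹((0,r)) ∩ N))^(1/n) · (H^n_g(f⁻¹((0,r)) ∩ N))^((n−1)/n)`. -/
theorem stmt_7 (n : ℕ) (hn : 2 ≤ n) {M : Type*} [ms : MeasurableSpace M]
    (g g0 : MetricSpace M)
    (htop : g.toUniformSpace.toTopologicalSpace = g0.toUniformSpace.toTopologicalSpace)
    (hcompact : @CompactSpace M g.toUniformSpace.toTopologicalSpace)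
    (hborel : @BorelSpace M g.toUniformSpace.toTopologicalSpace ms)
    (hborel0 : @BorelSpace M g0.toUniformSpace.toTopologicalSpace ms)
    (φ : M → ℝ)
    (hφ : @Continuous M ℝ g.toUniformSpace.toTopologicalSpace _ φ)
    (hconf : ∀ x : M, Filter.Tendsto
      (fun y => (@dist M g0.toPseudoMetricSpace.toDist x y) /
        (@dist M g.toPseudoMetricSpace.toDist x y))
      (@nhdsWithin M g.toUniformSpace.toTopologicalSpace x {x}ᶜ)
      (nhds (Real.exp (φ x))))
    (N D : Set M)
    (hN : @IsCompact M g.toUniformSpace.toTopologicalSpace N)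
    (hD : @IsCompact M g.toUniformSpace.toTopologicalSpace D)
    (hDN : D ⊆ N) (r : ℝ) (hr : 0 < r) :
    (∫⁻ t in Set.Ioo (0 : ℝ) r,
        @Measure.hausdorffMeasure M g.toEMetricSpace ms hborel ((n : ℝ) - 1)
          ((fun x => @Metric.infDist M g0.toPseudoMetricSpace x D) ⁻¹' {t} ∩
            @interior M g.toUniformSpace.toTopologicalSpace N)) ≤
      (@Measure.hausdorffMeasure M g0.toEMetricSpace ms hborel0 (n : ℝ)
          ((fun x => @Metric.infDist M g0.toPseudoMetricSpace x D) ⁻¹' Set.Ioo (0 : ℝ) r ∩ N))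
        ^ ((1 : ℝ) / n) *
      (@Measure.hausdorffMeasure M g.toEMetricSpace ms hborel (n : ℝ)
          ((fun x => @Metric.infDist M g0.toPseudoMetricSpace x D) ⁻¹' Set.Ioo (0 : ℝ) r ∩ N))
        ^ (((n : ℝ) - 1) / n) := by
  
  have hsc : @SecondCountableTopology M g.toUniformSpace.toTopologicalSpace := by
    letI := g
    infer_instance
  have hint : ∀ x y : M, |@Metric.infDist M g0.toPseudoMetricSpace x D -
      @Metric.infDist M g0.toPseudoMetricSpace y D| ≤ @dist M g0.toPseudoMetricSpace.toDist x y := by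
    letI := g0
    intro x y
    have := (Metric.lipschitz_infDist_pt D).dist_le_mul x y
    simpa [Real.dist_eq] using this
  have hcont : @Continuous M ℝ g.toUniformSpace.toTopologicalSpace _
      (fun x => @Metric.infDist M g0.toPseudoMetricSpace x D) := by
    rw [htop]
    letI := g0
    exact Metric.continuous_infDist_pt D
  have hd0 : ∀ y : M, @Continuous M ℝ g.toUniformSpace.toTopologicalSpace _
      (fun x => @dist M g0.toPseudoMetricSpace.toDist x y) := by
    rw [htop]
    letI := g0
    intro y
    fun_prop
  have hself : ∀ x : M, @dist M g0.toPseudoMetricSpace.toDist x x = 0 := by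
    letI := g0
    exact dist_self
  have hν : ∀ (S : Set M) (c : NNReal), 0 < c →
      (∀ x ∈ S, ∀ y ∈ S, c * @dist M g.toPseudoMetricSpace.toDist x y ≤
        @dist M g0.toPseudoMetricSpace.toDist x y) →
      (c : ENNReal) ^ (n : ℝ) * @Measure.hausdorffMeasure M g.toEMetricSpace ms hborel (n : ℝ) S ≤
        @Measure.hausdorffMeasure M g0.toEMetricSpace ms hborel0 (n : ℝ) S := by
    intro S c hc h
    have hlip : @LipschitzOnWith M M g0.toPseudoMetricSpace.toPseudoEMetricSpace
        g.toPseudoMetricSpace.toPseudoEMetricSpace c⁻¹ id S := by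
      refine @LipschitzOnWith.of_dist_le_mul M M g0.toPseudoMetricSpace g.toPseudoMetricSpace
        _ _ _ fun x hx y hy => ?_
      have hc' : (0 : ℝ) < c := hc
      have := h x hx y hy
      rw [NNReal.coe_inv, ← div_eq_inv_mul, le_div_iff₀ hc', mul_comm]
      exact this
    have h2 := @LipschitzOnWith.hausdorffMeasure_image_le M M g0.toEMetricSpace g.toEMetricSpace
      ms hborel0 ms hborel c⁻¹ id S hlip (n : ℝ) (Nat.cast_nonneg n)
    rw [Set.image_id] at h2
    have hc0 : (c : ENNReal) ≠ 0 := by simpa using hc.ne'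
    refine (mul_le_mul_right h2 _).trans ?_
    rw [← mul_assoc, ← ENNReal.mul_rpow_of_nonneg _ _ (Nat.cast_nonneg n),
      ENNReal.coe_inv hc.ne', ENNReal.mul_inv_cancel hc0 ENNReal.coe_ne_top, ENNReal.one_rpow,
      one_mul]
  have hA : MeasurableSet ((fun x => @Metric.infDist M g0.toPseudoMetricSpace x D) ⁻¹'
      Set.Ioo (0 : ℝ) r ∩ N) := by
    letI := g
    exact (hcont.measurable measurableSet_Ioo).inter hN.isClosed.measurableSet
  have hint2 : @interior M g.toUniformSpace.toTopologicalSpace N ⊆ N :=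
    @interior_subset M g.toUniformSpace.toTopologicalSpace N
  have key : ∀ l : NNReal, 1 < l → _ := fun l hl =>
    @aux_core n hn M g ms hborel hsc
      (@Measure.hausdorffMeasure M g0.toEMetricSpace ms hborel0 (n : ℝ))
      (@dist M g0.toPseudoMetricSpace.toDist) hd0 hself hν φ hconf _ hint _ hA l hl
  generalize hR : (@Measure.hausdorffMeasure M g0.toEMetricSpace ms hborel0 (n : ℝ)
          ((fun x => @Metric.infDist M g0.toPseudoMetricSpace x D) ⁻¹' Set.Ioo (0 : ℝ) r ∩ N))
        ^ ((1 : ℝ) / n) *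
      (@Measure.hausdorffMeasure M g.toEMetricSpace ms hborel (n : ℝ)
          ((fun x => @Metric.infDist M g0.toPseudoMetricSpace x D) ⁻¹' Set.Ioo (0 : ℝ) r ∩ N))
        ^ (((n : ℝ) - 1) / n) = R at key ⊢
  have key2 : ∀ l : NNReal, 1 < l → (∫⁻ t in Set.Ioo (0 : ℝ) r,
        @Measure.hausdorffMeasure M g.toEMetricSpace ms hborel ((n : ℝ) - 1)
          ((fun x => @Metric.infDist M g0.toPseudoMetricSpace x D) ⁻¹' {t} ∩
            @interior M g.toUniformSpace.toTopologicalSpace N)) ≤ l * R := by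
    intro l hl
    obtain ⟨h, hm, h1, h2⟩ := key l hl
    refine le_trans ?_ ((setLIntegral_le_lintegral (Set.Ioo (0 : ℝ) r) h).trans h2)
    refine setLIntegral_mono hm fun t ht => le_trans (measure_mono ?_) (h1 t)
    rintro x ⟨hx1, hx2⟩
    refine ⟨⟨?_, hint2 hx2⟩, hx1⟩
    rw [Set.mem_preimage, Set.mem_singleton_iff] at hx1
    rw [Set.mem_preimage, hx1]
    exact ht
  have hlim : Filter.Tendsto (fun l : NNReal => (l : ENNReal) * R) (nhdsWithin 1 (Set.Ioi 1))
      (nhds (1 * R)) := by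
    refine ENNReal.Tendsto.mul_const ?_ (Or.inl one_ne_zero)
    have : Filter.Tendsto (fun l : NNReal => (l : ENNReal)) (nhds 1) (nhds ((1 : NNReal) : ENNReal)) :=
      ENNReal.continuous_coe.tendsto 1
    exact this.mono_left nhdsWithin_le_nhds
  rw [one_mul] at hlim
  exact ge_of_tendsto hlim (by
    filter_upwards [self_mem_nhdsWithin] with l hl
    exact key2 l hl)
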